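/- The map J_Δ : {(λ, d, μ) | λ, μ ∈ Λ_Δ(n,r), d ∈ D^Δ_{λ,μ}} → Θ_Δ(n,r) sending (λ, d, μ) to the matrix (|R^λ_k ∩ d(R^μ_l)|)_{k,l∈ℤ} is a well-defined bijection. Moreover, if A = J_Δ(λ,d,μ), then the row sums of A are ro(A) = λ and the column sums are co(A) = μ. -/

import Mathlib

open scoped Classical

noncomputable section

/-- The extended affine symmetric group `𝔖_{Δ,r}`: permutations `w` of `ℤ`
with `w (i + r) = w i + r` for all `i`. -/
def AffSym (r : ℕ) : Subgroup (Equiv.Perm ℤ) where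
  carrier := {w | ∀ i : ℤ, w (i + r) = w i + r}
  one_mem' := fun _ => rfl
  mul_mem' := by
    intro a b ha hb i
    simp only [Equiv.Perm.mul_apply, hb i, ha (b i)]
  inv_mem' := by
    intro a ha i
    apply a.injective
    rw [ha (a⁻¹ i)]
    simp

/-- The underlying function of the affine transposition `(i,j)`. -/
def tFun (r : ℕ) (i j : ℤ) : ℤ → ℤ := fun k =>
  if (r : ℤ) ∣ (k - i) then j + (k - i)
  else if (r : ℤ) ∣ (k - j) then i + (k - j)
  else k

theorem tFun_invol (r : ℕ) (i j : ℤ) (h : ¬ (r : ℤ) ∣ (j - i)) :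
    Function.Involutive (tFun r i j) := by
  intro k
  by_cases h1 : (r : ℤ) ∣ (k - i)
  · have e1 : tFun r i j k = j + (k - i) := by simp only [tFun]; rw [if_pos h1]
    have h2 : ¬ (r : ℤ) ∣ (j + (k - i) - i) := by
      intro hd
      apply h
      have h5 := hd.sub h1
      have h6 : j + (k - i) - i - (k - i) = j - i := by ring
      rwa [h6] at h5
    have h3 : (r : ℤ) ∣ (j + (k - i) - j) := by simpa using h1
    rw [e1]; simp only [tFun]; rw [if_neg h2, if_pos h3]; ring
  · by_cases h2 : (r : ℤ) ∣ (k - j)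
    · have e1 : tFun r i j k = i + (k - j) := by
        simp only [tFun]; rw [if_neg h1, if_pos h2]
      have h3 : (r : ℤ) ∣ (i + (k - j) - i) := by simpa using h2
      rw [e1]; simp only [tFun]; rw [if_pos h3]; ring
    · have e1 : tFun r i j k = k := by simp only [tFun]; rw [if_neg h1, if_neg h2]
      rw [e1, e1]

/-- The affine transposition `(i,j) ∈ W_r` (defined to be `1` in the degenerate
case `i ≡ j (mod r)`). -/
def tPerm (r : ℕ) (i j : ℤ) : Equiv.Perm ℤ :=
  if h : (r : ℤ) ∣ (j - i) then 1 else Function.Involutive.toPerm _ (tFun_invol r i j h)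

/-- The set of Coxeter generators `s_1, …, s_r` of `W_r`. -/
def sGen (r : ℕ) : Set (Equiv.Perm ℤ) :=
  {w | ∃ i : ℤ, 1 ≤ i ∧ i ≤ (r : ℤ) ∧ w = tPerm r i (i + 1)}

/-- The affine Weyl group `W_r`, generated by `s_1, …, s_r`. -/
def WGrp (r : ℕ) : Subgroup (Equiv.Perm ℤ) := Subgroup.closure (sGen r)

/-- Length of an element of `W_r`: the minimal length of an expression
as a product of the generators `s_1, …, s_r`. -/
def lenW (r : ℕ) (x : Equiv.Perm ℤ) : ℕ :=
  sInf {m | ∃ l : List (Equiv.Perm ℤ), l.length = m ∧ (∀ s ∈ l, s ∈ sGen r) ∧ l.prod = x}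

/-- The shift permutation `ρ : j ↦ j + 1`. -/
def rhoP : Equiv.Perm ℤ := Equiv.addRight 1

/-- For `w = ρ^a x` with `x ∈ W_r`, recovers the exponent `a`. -/
def shiftIdx (r : ℕ) (w : Equiv.Perm ℤ) : ℤ :=
  (∑ i ∈ Finset.Icc (1 : ℤ) (r : ℤ), (w i - i)) / r

/-- Length on `𝔖_{Δ,r}`: writing `w = ρ^a x` with `x ∈ W_r`, `ℓ(w) = ℓ(x)`. -/
def alen (r : ℕ) (w : Equiv.Perm ℤ) : ℕ :=
  lenW r ((rhoP ^ shiftIdx r w)⁻¹ * w)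

/-- The set `T` of affine reflections `(i,j)`, `i < j`, `i ≢ j (mod r)`. -/
def TSet (r : ℕ) : Set (Equiv.Perm ℤ) :=
  {t | ∃ i j : ℤ, i < j ∧ ¬ (r : ℤ) ∣ (j - i) ∧ t = tPerm r i j}

/-- Bruhat order on `W_r`: `y ≤ w` iff `w = t_1 ⋯ t_m y` with all `t_i ∈ T` and
`ℓ(t_i ⋯ t_m y) > ℓ(t_{i+1} ⋯ t_m y)` for all `i`. -/
def bruhatLE (r : ℕ) (y w : Equiv.Perm ℤ) : Prop :=
  ∃ l : List (Equiv.Perm ℤ), (∀ t ∈ l, t ∈ TSet r) ∧ w = l.prod * y ∧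
    ∀ k, k < l.length →
      lenW r ((l.drop (k + 1)).prod * y) < lenW r ((l.drop k).prod * y)

/-- Bruhat order extended to `𝔖_{Δ,r}`: `ρ^a y ≤ ρ^b w` iff `a = b` and `y ≤ w`. -/
def abruhatLE (r : ℕ) (y w : Equiv.Perm ℤ) : Prop :=
  shiftIdx r y = shiftIdx r w ∧
    bruhatLE r ((rhoP ^ shiftIdx r y)⁻¹ * y) ((rhoP ^ shiftIdx r w)⁻¹ * w)

/-- `Λ_Δ(n,r)`: `n`-periodic sequences of naturals summing to `r` over a period. -/
def LambdaSet (n r : ℕ) : Set (ℤ → ℕ) :=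
  {lam | (∀ i : ℤ, lam i = lam (i - n)) ∧ ∑ i ∈ Finset.Icc (1 : ℤ) (n : ℤ), lam i = r}

/-- The interval `R^λ_m ⊆ ℤ`; for `m = i + kn` with `1 ≤ i ≤ n` this is
`{λ_{k,i-1}+1, …, λ_{k,i-1}+λ_i}` where `λ_{k,i-1} = kr + λ_1 + ⋯ + λ_{i-1}`. -/
def Rset (n r : ℕ) (lam : ℤ → ℕ) (m : ℤ) : Set ℤ :=
  {a | ((m - 1) / n) * r + ∑ t ∈ Finset.Icc (1 : ℤ) ((m - 1) % n), (lam t : ℤ) < a ∧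
       a ≤ ((m - 1) / n) * r + ∑ t ∈ Finset.Icc (1 : ℤ) ((m - 1) % n + 1), (lam t : ℤ)}

/-- The finite symmetric group `𝔖_r ⊆ W_r`, generated by `s_1, …, s_{r-1}`. -/
def SymFin (r : ℕ) : Subgroup (Equiv.Perm ℤ) :=
  Subgroup.closure {w | ∃ i : ℤ, 1 ≤ i ∧ i < (r : ℤ) ∧ w = tPerm r i (i + 1)}

/-- The Young subgroup `𝔖_λ`: elements of `𝔖_r` stabilizing each `R^λ_i`, `1 ≤ i ≤ n`. -/
def YoungSet (n r : ℕ) (lam : ℤ → ℕ) : Set (Equiv.Perm ℤ) :=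
  {w | w ∈ SymFin r ∧ ∀ i : ℤ, 1 ≤ i → i ≤ (n : ℤ) → w '' Rset n r lam i = Rset n r lam i}

/-- `D^Δ_λ`: distinguished right coset representatives. -/
def DRep (n r : ℕ) (lam : ℤ → ℕ) : Set (Equiv.Perm ℤ) :=
  {d | d ∈ AffSym r ∧ ∀ w ∈ YoungSet n r lam, alen r (w * d) = alen r w + alen r d}

/-- `D^Δ_{λ,μ} = D^Δ_λ ∩ (D^Δ_μ)⁻¹`. -/
def DRep2 (n r : ℕ) (lam mu : ℤ → ℕ) : Set (Equiv.Perm ℤ) :=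
  {d | d ∈ DRep n r lam ∧ d⁻¹ ∈ DRep n r mu}

/-- The matrix `J_Δ(λ,d,μ) = (|R^λ_k ∩ d(R^μ_l)|)_{k,l}`. -/
def JMat (n r : ℕ) (lam mu : ℤ → ℕ) (d : Equiv.Perm ℤ) : ℤ → ℤ → ℕ :=
  fun k l => (Rset n r lam k ∩ (d '' Rset n r mu l)).ncard

/-- `Θ_Δ(n)`: ℕ-matrices, `n`-periodic along the diagonal, with finite rows and columns. -/
def ThetaSet (n : ℕ) : Set (ℤ → ℤ → ℕ) :=
  {A | (∀ i j : ℤ, A (i + n) (j + n) = A i j) ∧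
       (∀ i : ℤ, {j : ℤ | A i j ≠ 0}.Finite) ∧
       (∀ j : ℤ, {i : ℤ | A i j ≠ 0}.Finite)}

/-- `σ(A) = Σ_{1 ≤ i ≤ n, j ∈ ℤ} a_{i,j}`. -/
def sigmaTot (n : ℕ) (A : ℤ → ℤ → ℕ) : ℕ :=
  ∑ᶠ j : ℤ, ∑ i ∈ Finset.Icc (1 : ℤ) (n : ℤ), A i j

/-- Row sums. -/
def roM (A : ℤ → ℤ → ℕ) : ℤ → ℕ := fun i => ∑ᶠ j : ℤ, A i j

/-- Column sums. -/
def coM (A : ℤ → ℤ → ℕ) : ℤ → ℕ := fun j => ∑ᶠ i : ℤ, A i j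

/-- `σ_{i,j}(A)`: for `i < j` the sum `Σ_{s ≤ i, t ≥ j} a_{s,t}`; for `i > j` the
sum `Σ_{s ≥ i, t ≤ j} a_{s,t}`. -/
def sigmaOrd (A : ℤ → ℤ → ℕ) (i j : ℤ) : ℕ :=
  if i < j then ∑ᶠ (p : ℤ × ℤ) (_ : p.1 ≤ i ∧ j ≤ p.2), A p.1 p.2
  else ∑ᶠ (p : ℤ × ℤ) (_ : i ≤ p.1 ∧ p.2 ≤ j), A p.1 p.2

/-- The map `η_m : A ↦ (a_{i, mn+j})_{i,j}`. -/
def etaM (n : ℕ) (m : ℤ) (A : ℤ → ℤ → ℕ) : ℤ → ℤ → ℕ := fun i j => A i (m * n + j)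

/-- The double coset `𝔖_λ d 𝔖_μ`. -/
def DCoset (n r : ℕ) (lam mu : ℤ → ℕ) (d : Equiv.Perm ℤ) : Set (Equiv.Perm ℤ) :=
  {w | ∃ u ∈ YoungSet n r lam, ∃ v ∈ YoungSet n r mu, w = u * d * v}

/-- `d_A = Σ a_{i,j} a_{k,l}` over `1 ≤ i ≤ n`, `k ≤ i`, `j < l`. -/
def dWt (n : ℕ) (A : ℤ → ℤ → ℕ) : ℕ :=
  ∑ᶠ (q : (ℤ × ℤ) × ℤ × ℤ)
    (_ : 1 ≤ q.1.1 ∧ q.1.1 ≤ (n : ℤ) ∧ q.2.1 ≤ q.1.1 ∧ q.1.2 < q.2.2),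
    A q.1.1 q.1.2 * A q.2.1 q.2.2

/-- The embedding `A ↦ Ã` from `Θ_Δ(n)` to `Θ_Δ(N)`. -/
def tildeM (n N : ℕ) (A : ℤ → ℤ → ℕ) : ℤ → ℤ → ℕ := fun k l =>
  let k0 : ℤ := (k - 1) % N + 1
  let l' : ℤ := l - ((k - 1) / N) * N
  let l0 : ℤ := (l' - 1) % N + 1
  let m : ℤ := (l' - 1) / N
  if k0 ≤ n ∧ l0 ≤ n then A k0 (l0 + m * n) else 0

/-- `Θ̃_Δ(n)`: ℤ-matrices with nonnegative off-diagonal entries, `n`-periodic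
along the diagonal, with finite rows and columns. -/
def ThetaTSet (n : ℕ) : Set (ℤ → ℤ → ℤ) :=
  {A | (∀ i j : ℤ, i ≠ j → 0 ≤ A i j) ∧ (∀ i j : ℤ, A (i + n) (j + n) = A i j) ∧
       (∀ i : ℤ, {j : ℤ | A i j ≠ 0}.Finite) ∧ (∀ j : ℤ, {i : ℤ | A i j ≠ 0}.Finite)}

/-- Row sums (ℤ-entry version). -/
def roMZ (A : ℤ → ℤ → ℤ) : ℤ → ℤ := fun i => ∑ᶠ j : ℤ, A i j

/-- Column sums (ℤ-entry version). -/
def coMZ (A : ℤ → ℤ → ℤ) : ℤ → ℤ := fun j => ∑ᶠ i : ℤ, A i j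

/-- `σ_{i,j}` (ℤ-entry version). -/
def sigmaOrdZ (A : ℤ → ℤ → ℤ) (i j : ℤ) : ℤ :=
  if i < j then ∑ᶠ (p : ℤ × ℤ) (_ : p.1 ≤ i ∧ j ≤ p.2), A p.1 p.2
  else ∑ᶠ (p : ℤ × ℤ) (_ : i ≤ p.1 ∧ p.2 ≤ j), A p.1 p.2

/-- The relation `B ⊑ A` on `Θ̃_Δ(n)`. -/
def sqLE (B A : ℤ → ℤ → ℤ) : Prop :=
  (∀ i j : ℤ, i ≠ j → sigmaOrdZ B i j ≤ sigmaOrdZ A i j) ∧ roMZ B = roMZ A ∧ coMZ B = coMZ A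

/-- The vector `v_a ∈ V = 𝔽[ε,ε⁻¹]^r`: for `a = i + kr` with `1 ≤ i ≤ r`,
`v_a = ε^{-k} v_i` where `v_1, …, v_r` is the standard basis. -/
def vb (F : Type*) [Field F] (r : ℕ) (a : ℤ) : Fin r → LaurentPolynomial F :=
  if h : 0 < r then
    Pi.single ⟨((a - 1) % (r : ℤ)).toNat, by
      have h1 : (0 : ℤ) < (r : ℤ) := by exact_mod_cast h
      have h2 : 0 ≤ (a - 1) % (r : ℤ) := Int.emod_nonneg _ (by omega)
      have h3 : (a - 1) % (r : ℤ) < (r : ℤ) := Int.emod_lt_of_pos _ h1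
      omega⟩
      (LaurentPolynomial.T (-((a - 1) / (r : ℤ))))
  else 0

/-- The bound `Σ_{1 ≤ j ≤ i} λ_j + kr` for `m = i + kn`, `1 ≤ i ≤ n`. -/
def bnd (n r : ℕ) (lam : ℤ → ℕ) (m : ℤ) : ℤ :=
  ((m - 1) / n) * r + ∑ t ∈ Finset.Icc (1 : ℤ) ((m - 1) % n + 1), (lam t : ℤ)

/-- The lattice-filtration subspace `L_m = span_𝔽{v_a | a ≤ Σ_{1≤j≤i} λ_j + kr}`. -/
def Lsub (F : Type*) [Field F] (n r : ℕ) (lam : ℤ → ℕ) (m : ℤ) :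
    Submodule F (Fin r → LaurentPolynomial F) :=
  Submodule.span F {x | ∃ a : ℤ, a ≤ bnd n r lam m ∧ x = vb F r a}

/-- The subspace `L'_m = span_𝔽{v_{d(a)} | a ≤ Σ_{1≤j≤i} μ_j + kr}`. -/
def Lsub' (F : Type*) [Field F] (n r : ℕ) (mu : ℤ → ℕ) (d : Equiv.Perm ℤ) (m : ℤ) :
    Submodule F (Fin r → LaurentPolynomial F) :=
  Submodule.span F {x | ∃ a : ℤ, a ≤ bnd n r mu m ∧ x = vb F r (d a)}
end

namespace JProof

theorem app_inv (w : Equiv.Perm ℤ) (x : ℤ) : w (w⁻¹ x) = x := by simp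

theorem inv_app (w : Equiv.Perm ℤ) (x : ℤ) : w⁻¹ (w x) = x := by simp

theorem aff_shift {r : ℕ} {w : Equiv.Perm ℤ} (hw : w ∈ AffSym r) (i m : ℤ) :
    w (i + r * m) = w i + r * m := by
  have h : ∀ i : ℤ, w (i + r) = w i + r := hw
  induction m using Int.induction_on with
  | zero => simp
  | succ k ih =>
    have := h (i + r * k)
    rw [show i + (r : ℤ) * (k + 1) = i + r * k + r by ring, this, ih]; ring
  | pred k ih =>
    have := h (i + r * (-k - 1))
    rw [show i + (r : ℤ) * (-k - 1) + r = i + r * (-k) by ring, ih] at this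
    linarith

theorem per_shift {α : Type*} {r : ℕ} {f : ℤ → α} (hf : ∀ i : ℤ, f (i + r) = f i) (i m : ℤ) :
    f (i + r * m) = f i := by
  induction m using Int.induction_on with
  | zero => simp
  | succ k ih =>
    have := hf (i + r * k)
    rw [show i + (r : ℤ) * (k + 1) = i + r * k + r by ring, this, ih]
  | pred k ih =>
    have := hf (i + r * (-k - 1))
    rw [show i + (r : ℤ) * (-k - 1) + r = i + r * (-k) by ring, ih] at this
    exact this.symm

/-- residue in `[1,r]` -/
theorem res_eq (r : ℕ) (x : ℤ) : (x - 1) % r + 1 = x + r * (-((x - 1) / r)) := by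
  have := Int.emod_add_mul_ediv (x - 1) r
  linarith

theorem res_mem {r : ℕ} (hr : 1 ≤ r) (x : ℤ) : 1 ≤ (x - 1) % r + 1 ∧ (x - 1) % r + 1 ≤ r := by
  have h1 := Int.emod_nonneg (x - 1) (b := (r : ℤ)) (by omega)
  have h2 := Int.emod_lt_of_pos (x - 1) (b := (r : ℤ)) (by omega)
  omega

theorem res_shift {r : ℕ} {i : ℤ} (h1 : 1 ≤ i) (h2 : i ≤ r) (m : ℤ) :
    (i + r * m - 1) % r + 1 = i := by
  rw [show i + r * m - 1 = (i - 1) + r * m by ring, Int.add_mul_emod_self_left,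
    Int.emod_eq_of_lt (by omega) (by omega)]
  ring

theorem trans_sum {M : Type*} [AddCommMonoid M] {r : ℕ} (hr : 1 ≤ r) {w : Equiv.Perm ℤ}
    (hw : w ∈ AffSym r) (f : ℤ → M) (hf : ∀ i : ℤ, f (i + r) = f i) :
    ∑ i ∈ Finset.Icc (1 : ℤ) r, f (w i) = ∑ i ∈ Finset.Icc (1 : ℤ) r, f i := by
  have hw' : w⁻¹ ∈ AffSym r := (AffSym r).inv_mem hw
  refine Finset.sum_nbij' (fun i => (w i - 1) % r + 1) (fun j => (w⁻¹ j - 1) % r + 1) ?_ ?_ ?_ ?_ ?_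
  · intro i _; exact Finset.mem_Icc.2 (res_mem hr _)
  · intro i _; exact Finset.mem_Icc.2 (res_mem hr _)
  · intro i hi
    rw [Finset.mem_Icc] at hi
    rw [res_eq r (w i), aff_shift hw', JProof.inv_app, res_shift hi.1 hi.2]
  · intro i hi
    rw [Finset.mem_Icc] at hi
    rw [res_eq r (w⁻¹ i), aff_shift hw, JProof.app_inv, res_shift hi.1 hi.2]
  · intro i _
    rw [res_eq r (w i), per_shift hf]

/-- displacement sum -/
noncomputable def disp (r : ℕ) (w : Equiv.Perm ℤ) : ℤ := ∑ i ∈ Finset.Icc (1 : ℤ) (r : ℤ), (w i - i)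

theorem disp_mul {r : ℕ} (hr : 1 ≤ r) {v w : Equiv.Perm ℤ} (hv : v ∈ AffSym r)
    (hw : w ∈ AffSym r) : disp r (v * w) = disp r v + disp r w := by
  have hv' : ∀ i : ℤ, v (i + r) = v i + r := hv
  have := trans_sum hr hw (fun x => v x - x) (by intro i; simp only [hv']; ring)
  unfold disp
  rw [← this, ← Finset.sum_add_distrib]
  apply Finset.sum_congr rfl
  intro i _
  simp

theorem rhoP_zpow (a x : ℤ) : (rhoP ^ a) x = x + a := by
  have h : ∀ x, rhoP x = x + 1 := fun x => rfl
  induction a using Int.induction_on generalizing x with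
  | zero => simp
  | succ k ih => rw [zpow_add_one, Equiv.Perm.mul_apply, ih, h]; ring
  | pred k ih =>
    rw [zpow_sub_one, Equiv.Perm.mul_apply, ih]
    have : rhoP⁻¹ x = x - 1 := by rw [Equiv.Perm.inv_eq_iff_eq, h]; ring
    rw [this]; ring

theorem rho_mem (r : ℕ) (a : ℤ) : rhoP ^ a ∈ AffSym r := by
  intro i; rw [rhoP_zpow, rhoP_zpow]; ring

theorem disp_rho (r : ℕ) (a : ℤ) : disp r (rhoP ^ a) = r * a := by
  unfold disp
  simp [rhoP_zpow]

theorem disp_dvd {r : ℕ} (hr : 1 ≤ r) {w : Equiv.Perm ℤ} (hw : w ∈ AffSym r) :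
    (r : ℤ) ∣ disp r w := by
  have := trans_sum hr hw (fun x => x % (r : ℤ)) (by intro i; simp)
  unfold disp
  rw [Finset.sum_sub_distrib]
  apply Int.dvd_of_emod_eq_zero
  apply Int.emod_eq_emod_iff_emod_sub_eq_zero.1
  rw [Finset.sum_int_mod, this, ← Finset.sum_int_mod]

/-- inversions starting at `i` -/
def invAt (w : Equiv.Perm ℤ) (i : ℤ) : Set ℤ := {j | i < j ∧ w j < w i}

noncomputable def invc (r : ℕ) (w : Equiv.Perm ℤ) : ℕ := ∑ i ∈ Finset.Icc (1 : ℤ) (r : ℤ), (invAt w i).ncard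

theorem invAt_finite {r : ℕ} (hr : 1 ≤ r) {w : Equiv.Perm ℤ} (hw : w ∈ AffSym r) (i : ℤ) :
    (invAt w i).Finite := by
  -- bound of displacement
  have hb : ∃ C : ℤ, ∀ x, x - C ≤ w x := by
    obtain ⟨C, hC⟩ := (((Finset.Icc (1 : ℤ) r).image (fun x => x - w x)).finite_toSet).bddAbove
    refine ⟨C, fun x => ?_⟩
    have h1 := hC (show ((x - 1) % r + 1) - w ((x - 1) % r + 1) ∈ _ by
      simp only [Finset.coe_image, Set.mem_image]
      exact ⟨_, by simpa using res_mem hr x, rfl⟩)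
    rw [res_eq, aff_shift hw] at h1
    linarith
  obtain ⟨C, hC⟩ := hb
  apply (Set.finite_Icc i (w i + C)).subset
  rintro j ⟨h1, h2⟩
  have := hC j
  constructor <;> linarith

theorem invAt_per {r : ℕ} {w : Equiv.Perm ℤ} (hw : w ∈ AffSym r) (i : ℤ) :
    (invAt w (i + r)).ncard = (invAt w i).ncard := by
  have hw' : ∀ i : ℤ, w (i + r) = w i + r := hw
  have : invAt w (i + r) = (fun x => x + (r : ℤ)) '' invAt w i := by
    ext j
    simp only [invAt, Set.mem_ofPred_eq, Set.mem_image]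
    constructor
    · rintro ⟨h1, h2⟩
      refine ⟨j - r, ⟨by linarith, ?_⟩, by ring⟩
      have := hw' (j - r)
      rw [sub_add_cancel] at this
      rw [hw'] at h2
      linarith
    · rintro ⟨x, ⟨h1, h2⟩, rfl⟩
      rw [hw', hw']
      constructor <;> linarith
  rw [this, Set.ncard_image_of_injective _ (add_left_injective _)]

/-- no cancellation implies additivity of the inversion number -/
theorem invc_mul {r : ℕ} (hr : 1 ≤ r) {w d : Equiv.Perm ℤ} (hw : w ∈ AffSym r)
    (hd : d ∈ AffSym r) (hnc : ∀ a b, a < b → d b < d a → w (d b) < w (d a)) :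
    invc r (w * d) = invc r w + invc r d := by
  unfold invc
  rw [← trans_sum hr hd (fun i => (invAt w i).ncard) (invAt_per hw), ← Finset.sum_add_distrib]
  apply Finset.sum_congr rfl
  intro a _
  have hinj : Function.Injective (d⁻¹ : Equiv.Perm ℤ) := (d⁻¹).injective
  have : invAt (w * d) a = (d⁻¹ : Equiv.Perm ℤ) '' invAt w (d a) ∪ invAt d a := by
    ext j
    simp only [invAt, Set.mem_ofPred_eq, Set.mem_image, Set.mem_union, Equiv.Perm.mul_apply]
    constructor
    · rintro ⟨h1, h2⟩
      rcases lt_trichotomy (d a) (d j) with h | h | h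
      · left; exact ⟨d j, ⟨h, h2⟩, by simp⟩
      · have := d.injective h; omega
      · right; exact ⟨h1, h⟩
    · rintro (⟨x, ⟨h1, h2⟩, rfl⟩ | ⟨h1, h2⟩)
      · simp only [JProof.app_inv]
        refine ⟨?_, h2⟩
        rcases lt_trichotomy a (d⁻¹ x) with h | h | h
        · exact h
        · subst h; simp at h1
        · have := hnc _ _ h (by simpa using h1)
          simp at this; linarith
      · exact ⟨h1, hnc _ _ h1 h2⟩
  rw [this, Set.ncard_union_eq ?_ ?_ ?_, Set.ncard_image_of_injective _ hinj]
  · rw [Set.disjoint_left]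
    rintro _ ⟨x, ⟨h1, h2⟩, rfl⟩ ⟨h3, h4⟩
    simp at h4; linarith
  · exact (invAt_finite hr hw _).image _
  · exact invAt_finite hr hd _

theorem invc_rho_mul (r : ℕ) (a : ℤ) (w : Equiv.Perm ℤ) : invc r (rhoP ^ a * w) = invc r w := by
  unfold invc invAt
  simp [rhoP_zpow]

/-- simple reflections -/
theorem s_apply {r : ℕ} (hr : 2 ≤ r) (i k : ℤ) :
    tPerm r i (i + 1) k = if (r : ℤ) ∣ (k - i) then k + 1
      else if (r : ℤ) ∣ (k - (i + 1)) then k - 1 else k := by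
  have h : ¬ (r : ℤ) ∣ (i + 1 - i) := by
    intro h
    have := Int.le_of_dvd (by norm_num) h
    omega
  unfold tPerm
  rw [dif_neg h]
  simp only [Function.Involutive.coe_toPerm, tFun]
  split_ifs <;> ring

theorem s_one {r : ℕ} (hr : r = 1) (i : ℤ) : tPerm r i (i + 1) = 1 := by
  unfold tPerm
  rw [dif_pos]; subst hr; simp

theorem s_mem {r : ℕ} (hr : 1 ≤ r) (i : ℤ) : tPerm r i (i + 1) ∈ AffSym r := by
  rcases Nat.lt_or_ge 1 r with h | h
  · intro k
    rw [s_apply h, s_apply h]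
    have e1 : ((r : ℤ) ∣ k + r - i) ↔ ((r : ℤ) ∣ k - i) := by
      rw [show k + r - i = k - i + r by ring]; simp
    have e2 : ((r : ℤ) ∣ k + r - (i + 1)) ↔ ((r : ℤ) ∣ k - (i + 1)) := by
      rw [show k + r - (i + 1) = k - (i + 1) + r by ring]; simp
    simp only [e1, e2]
    split_ifs <;> ring
  · rw [s_one (by omega)]; exact (AffSym r).one_mem

theorem s_sq {r : ℕ} (i : ℤ) : tPerm r i (i + 1) * tPerm r i (i + 1) = 1 := by
  unfold tPerm
  split_ifs with h
  · simp
  · ext x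
    simp only [Equiv.Perm.mul_apply, Function.Involutive.coe_toPerm]
    rw [tFun_invol r _ _ h]; rfl

/-- a simple reflection inverts only the pairs `(i,i+1)` mod `r` -/
theorem s_inv {r : ℕ} (hr : 2 ≤ r) (i x y : ℤ) (hxy : x < y)
    (h : tPerm r i (i + 1) y < tPerm r i (i + 1) x) : (r : ℤ) ∣ x - i ∧ y = x + 1 := by
  rw [s_apply hr, s_apply hr] at h
  have key : ∀ a : ℤ, ¬ ((r : ℤ) ∣ a ∧ (r : ℤ) ∣ a + 1) := by
    rintro a ⟨h1, h2⟩
    have := (Int.dvd_add_right h1).1 h2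
    have := Int.le_of_dvd (by norm_num) this
    omega
  split_ifs at h <;> omega

theorem invc_s {r : ℕ} (hr : 2 ≤ r) (i : ℤ) : invc r (tPerm r i (i + 1)) = 1 := by
  have hd : ∀ y : ℤ, (invAt (tPerm r i (i + 1)) y) = if (r : ℤ) ∣ y - i then {y + 1} else ∅ := by
    intro y
    ext z
    constructor
    · rintro ⟨h1, h2⟩
      have := s_inv hr i y z h1 h2
      rw [if_pos this.1]; exact this.2
    · split_ifs with h
      · rintro rfl
        refine ⟨by omega, ?_⟩
        rw [s_apply hr, s_apply hr, if_pos h, if_neg, if_pos]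
        · omega
        · convert h using 1; ring
        · intro h2
          rw [show y + 1 - i = (y - i) + 1 by ring] at h2
          have := (Int.dvd_add_right h).1 h2
          have := Int.le_of_dvd (by norm_num) this
          omega
      · rintro ⟨⟩
  unfold invc
  simp only [hd]
  rw [Finset.sum_eq_single ((i - 1) % r + 1)]
  · rw [if_pos]
    · simp
    · rw [res_eq]; simp
  · intro b hb hne
    rw [if_neg]
    · simp
    · rintro ⟨m, hm⟩
      apply hne
      rw [Finset.mem_Icc] at hb
      rw [show i = b + r * (-m) by linarith, res_shift hb.1 hb.2]
  · intro h
    exact absurd (Finset.mem_Icc.2 (res_mem (by omega) i)) h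

theorem inv_dvd_lt {r : ℕ} {d : Equiv.Perm ℤ} (hd : d ∈ AffSym r) {i x : ℤ} (h : (r : ℤ) ∣ x - i)
    (hi : d i < d (i + 1)) : d x < d (x + 1) := by
  obtain ⟨m, hm⟩ := h
  rw [show x = i + r * m by linarith, show i + r * m + 1 = i + 1 + r * m by ring, aff_shift hd,
    aff_shift hd]
  linarith

theorem invc_s_mul_up {r : ℕ} (hr : 2 ≤ r) {d : Equiv.Perm ℤ} (hd : d ∈ AffSym r) (i : ℤ)
    (h : d⁻¹ i < d⁻¹ (i + 1)) : invc r (tPerm r i (i + 1) * d) = 1 + invc r d := by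
  rw [invc_mul (by omega) (s_mem (by omega) i) hd, invc_s hr]
  intro a b hab hba
  by_contra hcon
  have hne : tPerm r i (i + 1) (d a) ≠ tPerm r i (i + 1) (d b) := by
    intro h; have := d.injective ((tPerm r i (i + 1)).injective h); omega
  have := s_inv hr i (d b) (d a) hba (by omega)
  have h2 := inv_dvd_lt ((AffSym r).inv_mem hd) this.1 h
  rw [← this.2] at h2
  simp at h2
  omega

theorem invc_s_mul_down {r : ℕ} (hr : 2 ≤ r) {d : Equiv.Perm ℤ} (hd : d ∈ AffSym r) (i : ℤ)
    (h : d⁻¹ (i + 1) < d⁻¹ i) : invc r d = 1 + invc r (tPerm r i (i + 1) * d) := by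
  have hs : tPerm r i (i + 1) i = i + 1 := by rw [s_apply hr]; simp
  have hs' : tPerm r i (i + 1) (i + 1) = i := by
    have : tPerm r i (i + 1) (tPerm r i (i + 1) i) = i := by
      rw [← Equiv.Perm.mul_apply, s_sq]; rfl
    rwa [hs] at this
  have hinv : (tPerm r i (i + 1))⁻¹ = tPerm r i (i + 1) := inv_eq_of_mul_eq_one_left (s_sq i)
  have := invc_s_mul_up hr ((AffSym r).mul_mem (s_mem (by omega) i) hd) i (by
    rw [mul_inv_rev, hinv]; simp only [Equiv.Perm.mul_apply, hs, hs']; exact h)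
  rwa [← mul_assoc, s_sq, one_mul] at this

theorem mono_of_consec {f : ℤ → ℤ} (h : ∀ i, f i < f (i + 1)) : StrictMono f :=
  strictMono_int_of_lt_succ h

theorem eq_rho_of_mono (w : Equiv.Perm ℤ) (h : StrictMono w) : ∃ a : ℤ, w = rhoP ^ a := by
  refine ⟨w 0, ?_⟩
  have hs : ∀ i, w (i + 1) = w i + 1 := by
    intro i
    have h1 : w i < w (i + 1) := h (by omega)
    by_contra hne
    have h2 := h.lt_iff_lt (a := i) (b := w⁻¹ (w i + 1))
    have h3 := h.lt_iff_lt (a := w⁻¹ (w i + 1)) (b := i + 1)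
    simp only [JProof.app_inv] at h2 h3
    have := h2.1 (by omega)
    have := h3.1 (by omega)
    omega
  ext x
  rw [rhoP_zpow]
  induction x using Int.induction_on with
  | zero => simp
  | succ k ih => rw [hs, ih]; ring
  | pred k ih =>
    have := hs (-k - 1)
    rw [sub_add_cancel, ih] at this
    linarith

theorem disp_s {r : ℕ} (hr : 1 ≤ r) (i : ℤ) : disp r (tPerm r i (i + 1)) = 0 := by
  have h := disp_mul hr (s_mem hr i) (s_mem hr i)
  rw [s_sq] at h
  have : disp r 1 = 0 := by simp [disp]
  omega

theorem exists_descent {r : ℕ} (hr : 1 ≤ r) {x : Equiv.Perm ℤ} (hx : x ∈ AffSym r)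
    (h : ∀ i : ℤ, 1 ≤ i → i ≤ r → x⁻¹ i < x⁻¹ (i + 1)) : ∃ a : ℤ, x = rhoP ^ a := by
  have hx' := (AffSym r).inv_mem hx
  have hm : StrictMono (x⁻¹ : Equiv.Perm ℤ) := by
    apply mono_of_consec
    intro i
    have h1 := h _ (res_mem hr i).1 (res_mem hr i).2
    refine inv_dvd_lt hx' ?_ h1
    rw [res_eq]; simp
  obtain ⟨a, ha⟩ := eq_rho_of_mono _ hm
  exact ⟨-a, by rw [zpow_neg, ← ha, inv_inv]⟩

theorem exists_word {r : ℕ} (hr : 1 ≤ r) (m : ℕ) : ∀ x : Equiv.Perm ℤ, x ∈ AffSym r →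
    disp r x = 0 → invc r x = m →
    ∃ l : List (Equiv.Perm ℤ), l.length = m ∧ (∀ s ∈ l, s ∈ sGen r) ∧ l.prod = x := by
  induction m with
  | zero =>
    intro x hx h0 hi
    refine ⟨[], rfl, by simp, ?_⟩
    have : ∃ a : ℤ, x = rhoP ^ a := by
      apply exists_descent hr hx
      intro i _ _
      rcases Nat.lt_or_ge 1 r with h | h
      · by_contra hcon
        have hne : (x⁻¹ : Equiv.Perm ℤ) (i + 1) ≠ x⁻¹ i := by
          intro h; have := (x⁻¹).injective h; omega
        have := invc_s_mul_down h hx i (by omega)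
        omega
      · have := (AffSym r).inv_mem hx i
        rw [show r = 1 by omega] at this
        push_cast at this
        omega
    obtain ⟨a, rfl⟩ := this
    rw [disp_rho] at h0
    have : a = 0 := by
      rcases mul_eq_zero.1 h0 with h | h
      · omega
      · exact h
    simp [this]
  | succ m ih =>
    intro x hx h0 hi
    by_cases hdes : ∀ i : ℤ, 1 ≤ i → i ≤ r → x⁻¹ i < x⁻¹ (i + 1)
    · obtain ⟨a, rfl⟩ := exists_descent hr hx hdes
      have := invc_rho_mul r a 1
      rw [mul_one] at this
      rw [this] at hi
      exfalso
      have : invc r 1 = 0 := by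
        unfold invc
        apply Finset.sum_eq_zero
        intro i _
        have : invAt 1 i = ∅ := by
          ext j; simp only [invAt, Set.mem_ofPred_eq, Equiv.Perm.one_apply]; simp; omega
        rw [this]; simp
      omega
    · push Not at hdes
      obtain ⟨i, h1, h2, h3⟩ := hdes
      have hne : (x⁻¹ : Equiv.Perm ℤ) (i + 1) ≠ x⁻¹ i := by
        intro h; have := (x⁻¹).injective h; omega
      have hr2 : 2 ≤ r := by
        by_contra hlt
        have := (AffSym r).inv_mem hx i
        rw [show r = 1 by omega] at this
        push_cast at this
        omega
      have hd := invc_s_mul_down hr2 hx i (by omega)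
      obtain ⟨l, hl1, hl2, hl3⟩ := ih (tPerm r i (i + 1) * x)
        ((AffSym r).mul_mem (s_mem hr i) hx)
        (by rw [disp_mul hr (s_mem hr i) hx, disp_s hr, h0]; rfl) (by omega)
      refine ⟨tPerm r i (i + 1) :: l, by simp [hl1], ?_, ?_⟩
      · intro s hs
        rcases List.mem_cons.1 hs with rfl | hs
        · exact ⟨i, h1, h2, rfl⟩
        · exact hl2 s hs
      · rw [List.prod_cons, hl3, ← mul_assoc, s_sq, one_mul]

theorem word_le {r : ℕ} (hr : 1 ≤ r) (l : List (Equiv.Perm ℤ)) (hl : ∀ s ∈ l, s ∈ sGen r) :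
    l.prod ∈ AffSym r ∧ invc r l.prod ≤ l.length := by
  induction l with
  | nil =>
    refine ⟨(AffSym r).one_mem, ?_⟩
    simp [invc]
    intro i _ _
    have : invAt 1 i = ∅ := by
      ext j; simp only [invAt, Set.mem_ofPred_eq, Equiv.Perm.one_apply]; simp; omega
    rw [this]; simp
  | cons s l ih =>
    obtain ⟨h1, h2⟩ := ih (fun s hs => hl s (List.mem_cons_of_mem _ hs))
    obtain ⟨i, hi1, hi2, rfl⟩ := hl s (by simp)
    rw [List.prod_cons, List.length_cons]
    refine ⟨(AffSym r).mul_mem (s_mem hr i) h1, ?_⟩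
    rcases Nat.lt_or_ge 1 r with h | h
    · rcases lt_trichotomy ((l.prod)⁻¹ i) ((l.prod)⁻¹ (i + 1)) with h3 | h3 | h3
      · rw [invc_s_mul_up h h1 i h3]; omega
      · have := (l.prod⁻¹).injective h3; omega
      · have := invc_s_mul_down h h1 i h3; omega
    · rw [s_one (by omega), one_mul]; omega

theorem alen_eq {r : ℕ} (hr : 1 ≤ r) {w : Equiv.Perm ℤ} (hw : w ∈ AffSym r) :
    alen r w = invc r w := by
  have hsh : shiftIdx r w = disp r w / r := rfl
  unfold alen
  rw [hsh]
  set a := disp r w / r with ha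
  have hda : (r : ℤ) * a = disp r w := Int.mul_ediv_cancel' (disp_dvd hr hw)
  have hx : (rhoP ^ a)⁻¹ * w ∈ AffSym r := (AffSym r).mul_mem ((AffSym r).inv_mem (rho_mem r a)) hw
  have hinv : invc r ((rhoP ^ a)⁻¹ * w) = invc r w := by
    rw [← zpow_neg, invc_rho_mul]
  have h0 : disp r ((rhoP ^ a)⁻¹ * w) = 0 := by
    rw [← zpow_neg, disp_mul hr (rho_mem r _) hw, disp_rho]; linarith
  rw [← hinv]
  unfold lenW
  apply le_antisymm
  · exact Nat.sInf_le (exists_word hr _ _ hx h0 rfl)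
  · apply le_csInf
    · exact ⟨_, exists_word hr _ _ hx h0 rfl⟩
    · rintro m ⟨l, rfl, hl, hl2⟩
      rw [← hl2]
      exact (word_le hr l hl).2

/-! ### Blocks -/

noncomputable def PP (n r : ℕ) (lam : ℤ → ℕ) (m : ℤ) : ℤ :=
  (m / n) * r + ∑ t ∈ Finset.Icc (1 : ℤ) (m % n), (lam t : ℤ)

theorem sum_Icc_succ (f : ℤ → ℤ) {q : ℤ} (hq : 0 ≤ q) :
    ∑ t ∈ Finset.Icc (1 : ℤ) (q + 1), f t = ∑ t ∈ Finset.Icc (1 : ℤ) q, f t + f (q + 1) := by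
  have : Finset.Icc (1 : ℤ) (q + 1) = insert (q + 1) (Finset.Icc (1 : ℤ) q) := by
    ext x; simp only [Finset.mem_Icc, Finset.mem_insert]; omega
  rw [this, Finset.sum_insert (by simp), add_comm]

section blocks

variable {n r : ℕ} {lam : ℤ → ℕ}

theorem lam_per (hl : lam ∈ LambdaSet n r) (i : ℤ) : lam (i + n) = lam i := by
  have := hl.1 (i + n)
  rwa [add_sub_cancel_right] at this

theorem upper_eq (hn : 1 ≤ n) (hl : lam ∈ LambdaSet n r) (m : ℤ) :
    ((m - 1) / n) * r + ∑ t ∈ Finset.Icc (1 : ℤ) ((m - 1) % n + 1), (lam t : ℤ) = PP n r lam m := by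
  have h0 := res_mem hn m
  have hd := Int.emod_add_mul_ediv (m - 1) n
  unfold PP
  by_cases h : (m - 1) % n + 1 < n
  · have h1 : m / n = (m - 1) / n ∧ m % n = (m - 1) % n + 1 := by
      rw [Int.ediv_emod_unique (by omega)]
      exact ⟨by linarith, by omega, h⟩
    rw [h1.1, h1.2]
  · have h1 : m / n = (m - 1) / n + 1 ∧ m % n = 0 := by
      rw [Int.ediv_emod_unique (by omega)]
      exact ⟨by have : (m - 1) % n + 1 = n := by omega
                linarith, by omega, by omega⟩
    rw [h1.1, h1.2, show (m - 1) % n + 1 = n by omega]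
    have : ∑ t ∈ Finset.Icc (1 : ℤ) n, (lam t : ℤ) = r := by
      rw [← hl.2]; push_cast; rfl
    rw [this]; simp; ring

theorem PP_step (hn : 1 ≤ n) (hl : lam ∈ LambdaSet n r) (m : ℤ) :
    PP n r lam m = PP n r lam (m - 1) + lam m := by
  have h0 := res_mem hn m
  rw [← upper_eq hn hl, sum_Icc_succ _ (by omega), res_eq, per_shift (lam_per hl)]
  unfold PP; ring

theorem PP_shift (hn : 1 ≤ n) (m : ℤ) : PP n r lam (m + n) = PP n r lam m + r := by
  unfold PP
  have : (n : ℤ) ≠ 0 := by omega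
  rw [Int.add_ediv_of_dvd_right (by simp), Int.ediv_self this, Int.add_emod_right]
  ring

theorem Rset_eq (hn : 1 ≤ n) (hl : lam ∈ LambdaSet n r) (m : ℤ) :
    Rset n r lam m = Set.Ioc (PP n r lam (m - 1)) (PP n r lam m) := by
  rw [← upper_eq hn hl m]; rfl

theorem PP_mono (hn : 1 ≤ n) (hl : lam ∈ LambdaSet n r) : Monotone (PP n r lam) := by
  apply monotone_int_of_le_succ
  intro m
  have := PP_step hn hl (m + 1)
  rw [add_sub_cancel_right] at this
  omega

theorem PP_zero : PP n r lam 0 = 0 := by simp [PP]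

theorem PP_mul (hn : 1 ≤ n) (m : ℤ) : PP n r lam (n * m) = r * m := by
  have : (n : ℤ) ≠ 0 := by omega
  unfold PP
  rw [Int.mul_ediv_cancel_left _ this, Int.mul_emod_right]
  simp; ring

theorem exists_step {Q : ℤ → ℤ} (hQ : Monotone Q) {x : ℤ} (h1 : ∃ m, Q m < x)
    (h2 : ∃ m, x ≤ Q m) : ∃ k, Q (k - 1) < x ∧ x ≤ Q k := by
  obtain ⟨m, hm⟩ := h1
  obtain ⟨k, hk, hk2⟩ := Int.exists_least_of_bdd (P := fun z => x ≤ Q z)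
    ⟨m, fun z hz => by
      by_contra hlt
      have := hQ (show z ≤ m by omega)
      omega⟩ h2
  refine ⟨k, ?_, hk⟩
  by_contra hcon
  have := hk2 (k - 1) (by omega)
  omega

theorem step_lt {Q : ℤ → ℤ} (hQ : Monotone Q) {x y k l : ℤ} (h1 : x ≤ Q k) (h2 : Q (l - 1) < y)
    (h : y ≤ x) : l ≤ k := by
  by_contra hcon
  have := hQ (show k ≤ l - 1 by omega)
  omega

theorem exists_blk (hn : 1 ≤ n) (hr : 1 ≤ r) (hl : lam ∈ LambdaSet n r) :
    ∃ b : ℤ → ℤ, (∀ x k, x ∈ Rset n r lam k ↔ b x = k) ∧ Monotone b ∧ ∀ x, b (x + r) = b x + n := by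
  have hmono := PP_mono hn hl
  have hex : ∀ x, ∃ k, PP n r lam (k - 1) < x ∧ x ≤ PP n r lam k := by
    intro x
    apply exists_step hmono
    · refine ⟨n * (-|x| - 1), ?_⟩
      rw [PP_mul hn]
      have := neg_abs_le x
      have := abs_nonneg x
      have : (1 : ℤ) ≤ r := by omega
      nlinarith
    · refine ⟨n * |x|, ?_⟩
      rw [PP_mul hn]
      have := le_abs_self x
      have := abs_nonneg x
      have : (1 : ℤ) ≤ r := by omega
      nlinarith
  choose b hb1 hb2 using hex
  have hm : ∀ x k, x ∈ Rset n r lam k ↔ b x = k := by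
    intro x k
    rw [Rset_eq hn hl, Set.mem_Ioc]
    constructor
    · rintro ⟨h1, h2⟩
      exact le_antisymm (step_lt hmono h2 (hb1 x) le_rfl) (step_lt hmono (hb2 x) h1 le_rfl)
    · rintro rfl; exact ⟨hb1 x, hb2 x⟩
  refine ⟨b, hm, ?_, ?_⟩
  · intro x y hxy
    exact step_lt hmono (hb2 y) (hb1 x) hxy
  · intro x
    rw [← hm, Rset_eq hn hl, Set.mem_Ioc, show b x + n - 1 = b x - 1 + n by ring, PP_shift hn,
      PP_shift hn]
    have := hb1 x
    have := hb2 x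
    constructor <;> linarith

theorem blk_shift {b : ℤ → ℤ} (hb : ∀ x, b (x + r) = b x + n) (x m : ℤ) :
    b (x + r * m) = b x + n * m := by
  have := per_shift (r := 1) (f := fun m : ℤ => b (x + r * m) - n * m) (by
    intro i
    simp only [Nat.cast_one]
    rw [show x + r * (i + 1) = x + r * i + r by ring, hb]; ring) 0 m
  simp at this
  linarith

theorem symFin_le (hr : 1 ≤ r) : SymFin r ≤ AffSym r := by
  unfold SymFin
  rw [Subgroup.closure_le]
  rintro _ ⟨i, _, _, rfl⟩
  exact s_mem hr i

theorem drep_consec (hn : 1 ≤ n) (hr : 1 ≤ r) (hl : lam ∈ LambdaSet n r) {d : Equiv.Perm ℤ}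
    (hd : d ∈ DRep n r lam) {i k : ℤ} (hi : i ∈ Rset n r lam k) (hi' : i + 1 ∈ Rset n r lam k) :
    d⁻¹ i < d⁻¹ (i + 1) := by
  obtain ⟨b, hb1, hb2, hb3⟩ := exists_blk hn hr hl
  have hA := hd.1
  have hA' := (AffSym r).inv_mem hA
  rw [hb1] at hi hi'
  set m := -((k - 1) / n) with hm
  set k0 := k + n * m with hk0
  have hk0' : 1 ≤ k0 ∧ k0 ≤ n := by rw [hk0, hm, ← res_eq]; exact res_mem hn k
  set i0 := i + r * m with hi0
  have e1 : b i0 = k0 := by rw [hi0, blk_shift hb3, hi]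
  have e2 : b (i0 + 1) = k0 := by
    rw [hi0, show i + r * m + 1 = i + 1 + r * m by ring, blk_shift hb3, hi']
  have r1 := (hb1 _ _).2 e1
  have r2 := (hb1 _ _).2 e2
  rw [Rset_eq hn hl, Set.mem_Ioc] at r1 r2
  have hP0 := PP_mono hn hl (show 0 ≤ k0 - 1 by omega)
  have hPn := PP_mono hn hl (show k0 ≤ n by omega)
  rw [PP_zero] at hP0
  have hn1 : PP n r lam n = r := by
    have := PP_mul (r := r) (lam := lam) hn 1
    simpa using this
  rw [hn1] at hPn
  have hr2 : 2 ≤ r := by omega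
  have hbs : ∀ x, b (tPerm r i0 (i0 + 1) x) = b x := by
    intro x
    rw [s_apply hr2]
    split_ifs with h h'
    · obtain ⟨q, hq⟩ := h
      rw [show x + 1 = i0 + 1 + r * q by linarith, show x = i0 + r * q by linarith, blk_shift hb3,
        blk_shift hb3, e1, e2]
    · obtain ⟨q, hq⟩ := h'
      rw [show x - 1 = i0 + r * q by linarith, show x = i0 + 1 + r * q by linarith,
        blk_shift hb3 i0, blk_shift hb3 (i0 + 1), e1, e2]
    · rfl
  have hY : tPerm r i0 (i0 + 1) ∈ YoungSet n r lam := by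
    refine ⟨Subgroup.subset_closure ⟨i0, by omega, by omega, rfl⟩, ?_⟩
    intro k' _ _
    ext y
    rw [Set.mem_image]
    constructor
    · rintro ⟨x, hx, rfl⟩
      rw [hb1] at hx ⊢
      rw [hbs, hx]
    · intro hy
      refine ⟨tPerm r i0 (i0 + 1) y, ?_, ?_⟩
      · rw [hb1] at hy ⊢
        rw [hbs, hy]
      · rw [← Equiv.Perm.mul_apply, s_sq]; rfl
  have h := hd.2 _ hY
  rw [alen_eq hr ((AffSym r).mul_mem (s_mem hr i0) hA), alen_eq hr (s_mem hr i0), alen_eq hr hA,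
    invc_s hr2] at h
  refine inv_dvd_lt hA' (i := i0) ⟨-m, by rw [hi0]; ring⟩ ?_
  by_contra hcon
  have hne : (d⁻¹ : Equiv.Perm ℤ) (i0 + 1) ≠ d⁻¹ i0 := by
    intro h; have := (d⁻¹).injective h; omega
  have := invc_s_mul_down hr2 hA i0 (by omega)
  omega

theorem drep_iff (hn : 1 ≤ n) (hr : 1 ≤ r) (hl : lam ∈ LambdaSet n r) (d : Equiv.Perm ℤ) :
    d ∈ DRep n r lam ↔ d ∈ AffSym r ∧ ∀ a b k, a ∈ Rset n r lam k → b ∈ Rset n r lam k → a < b →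
      d⁻¹ a < d⁻¹ b := by
  constructor
  · intro hd
    refine ⟨hd.1, ?_⟩
    have key : ∀ (t : ℕ) (a k : ℤ), a ∈ Rset n r lam k → a + t + 1 ∈ Rset n r lam k →
        d⁻¹ a < d⁻¹ (a + t + 1) := by
      intro t
      induction t with
      | zero =>
        intro a k ha hb
        simp only [Nat.cast_zero, add_zero] at hb ⊢
        exact drep_consec hn hr hl hd ha hb
      | succ t ih =>
        intro a k ha hb
        have hmid : a + t + 1 ∈ Rset n r lam k := by
          rw [Rset_eq hn hl, Set.mem_Ioc] at ha hb ⊢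
          push_cast at hb
          omega
        have h1 := ih a k ha hmid
        have h2 := drep_consec hn hr hl hd hmid (by
          convert hb using 1; push_cast; ring)
        push_cast
        rw [← add_assoc]
        exact h1.trans h2
    intro a b k ha hb hab
    have := key (b - a - 1).toNat a k ha (by
      rw [show a + ((b - a - 1).toNat : ℤ) + 1 = b by omega]; exact hb)
    rwa [show a + ((b - a - 1).toNat : ℤ) + 1 = b by omega] at this
  · rintro ⟨hA, hd⟩
    refine ⟨hA, ?_⟩
    rintro w ⟨hw, hws⟩
    have hwA := symFin_le hr hw
    rw [alen_eq hr ((AffSym r).mul_mem hwA hA), alen_eq hr hwA, alen_eq hr hA]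
    apply invc_mul hr hwA hA
    obtain ⟨b, hb1, hb2, hb3⟩ := exists_blk hn hr hl
    have hbw : ∀ x, b (w x) = b x := by
      intro x
      have h0 := res_mem hn (b x)
      have h1 := hws _ h0.1 h0.2
      have h2 : w (x + r * (-((b x - 1) / n))) ∈ Rset n r lam ((b x - 1) % n + 1) := by
        rw [← h1]
        refine Set.mem_image_of_mem _ ?_
        rw [hb1, blk_shift hb3, res_eq]
      rw [hb1, aff_shift hwA, blk_shift hb3, res_eq] at h2
      linarith
    intro x y hxy hyx
    by_contra hcon
    have hle : b (w (d x)) ≤ b (w (d y)) := hb2 (not_lt.1 hcon)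
    rw [hbw, hbw] at hle
    have heq := le_antisymm hle (hb2 hyx.le)
    have := hd (d y) (d x) (b (d x)) ((hb1 _ _).2 heq.symm) ((hb1 _ _).2 rfl) hyx
    rw [inv_app, inv_app] at this
    omega

end blocks

/-! ### Partial sums -/

noncomputable def psum (a : ℤ → ℕ) (l : ℤ) : ℕ := ∑ᶠ l' : ℤ, if l' ≤ l then a l' else 0

theorem fin_ite {a : ℤ → ℕ} (ha : {l | a l ≠ 0}.Finite) (p : ℤ → Prop) [DecidablePred p] :
    (Function.support fun l' => if p l' then a l' else 0).Finite := by
  apply ha.subset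
  intro x hx
  simp only [Function.mem_support] at hx
  intro h
  apply hx
  rw [h]; simp

theorem psum_step {a : ℤ → ℕ} (ha : {l | a l ≠ 0}.Finite) (l : ℤ) :
    psum a l = psum a (l - 1) + a l := by
  unfold psum
  have : a l = ∑ᶠ l' : ℤ, if l' = l then a l' else 0 := by
    rw [finsum_eq_single _ l (by intro x hx; rw [if_neg hx])]; simp
  rw [this, ← finsum_add_distrib (fin_ite ha _) (fin_ite ha _)]
  apply finsum_congr
  intro x
  split_ifs <;> omega

theorem psum_mono {a : ℤ → ℕ} (ha : {l | a l ≠ 0}.Finite) : Monotone (psum a) := by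
  apply monotone_int_of_le_succ
  intro m
  have := psum_step ha (m + 1)
  rw [add_sub_cancel_right] at this
  omega

theorem psum_zero {a : ℤ → ℕ} (ha : {l | a l ≠ 0}.Finite) : ∃ m, psum a m = 0 := by
  obtain ⟨m, hm⟩ := ha.bddBelow
  refine ⟨m - 1, ?_⟩
  unfold psum
  apply finsum_eq_zero_of_forall_eq_zero
  intro x
  split_ifs with h
  · by_contra hx
    have := hm (show x ∈ {l | a l ≠ 0} from hx)
    omega
  · rfl

theorem psum_total {a : ℤ → ℕ} (ha : {l | a l ≠ 0}.Finite) : ∃ m, ∀ m' ≥ m, psum a m' = ∑ᶠ l, a l := by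
  obtain ⟨m, hm⟩ := ha.bddAbove
  refine ⟨m, fun m' hm' => ?_⟩
  unfold psum
  apply finsum_congr
  intro x
  split_ifs with h
  · rfl
  · by_contra hx
    have := hm (show x ∈ {l | a l ≠ 0} from fun h => hx h.symm)
    omega

theorem psum_le_total {a : ℤ → ℕ} (ha : {l | a l ≠ 0}.Finite) (l : ℤ) :
    psum a l ≤ ∑ᶠ l, a l := by
  obtain ⟨m, hm⟩ := psum_total ha
  rw [← hm (max l m) (le_max_right _ _)]
  exact psum_mono ha (le_max_left _ _)

theorem fiber_total {S : Set ℤ} (hS : S.Finite) (h : ℤ → ℤ) :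
    ∑ᶠ l : ℤ, {x | x ∈ S ∧ h x = l}.ncard = S.ncard := by
  obtain ⟨s, rfl⟩ := hS.exists_finset_coe
  rw [Set.ncard_coe_finset, Finset.card_eq_sum_card_fiberwise (f := h) (t := s.image h)
    (by intro x hx; exact Finset.mem_coe.2 (Finset.mem_image_of_mem _ hx)),
    finsum_eq_sum_of_support_subset (s := s.image h)]
  · apply Finset.sum_congr rfl
    intro l _
    rw [← Set.ncard_coe_finset]
    have : {x | x ∈ (s : Set ℤ) ∧ h x = l} = ((s.filter fun a => h a = l : Finset ℤ) : Set ℤ) := by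
      ext x; simp
    rw [this]
  · intro l hl
    rw [Function.mem_support] at hl
    obtain ⟨x, hx, rfl⟩ := Set.nonempty_of_ncard_ne_zero hl
    exact Finset.mem_coe.2 (Finset.mem_image_of_mem _ hx)

theorem psum_fiber {S : Set ℤ} (hS : S.Finite) (h : ℤ → ℤ) (l : ℤ) :
    psum (fun l' => {x | x ∈ S ∧ h x = l'}.ncard) l = {x | x ∈ S ∧ h x ≤ l}.ncard := by
  rw [← fiber_total (S := {x | x ∈ S ∧ h x ≤ l}) (hS.subset fun x hx => hx.1) h]
  unfold psum
  apply finsum_congr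
  intro l'
  split_ifs with hl
  · refine congrArg Set.ncard ?_
    ext x
    simp only [Set.mem_ofPred_eq]
    constructor
    · rintro ⟨h1, h2⟩; exact ⟨⟨h1, by omega⟩, h2⟩
    · rintro ⟨⟨h1, _⟩, h2⟩; exact ⟨h1, h2⟩
  · symm
    rw [Set.ncard_eq_zero (hS.subset fun x hx => hx.1.1)]
    ext x
    simp only [Set.mem_ofPred_eq, Set.mem_empty_iff_false, iff_false]
    rintro ⟨⟨h1, h2⟩, h3⟩
    omega

/-! ### The matrix of a triple -/

section matrix

variable {n r : ℕ} {lam mu : ℤ → ℕ}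

theorem Rset_finite (hn : 1 ≤ n) (hl : lam ∈ LambdaSet n r) (k : ℤ) : (Rset n r lam k).Finite := by
  rw [Rset_eq hn hl]; exact Set.finite_Ioc _ _

theorem ncard_Ioc (a b : ℤ) : (Set.Ioc a b).ncard = (b - a).toNat := by
  rw [← Finset.coe_Ioc, Set.ncard_coe_finset, Int.card_Ioc]

theorem Rset_ncard (hn : 1 ≤ n) (hl : lam ∈ LambdaSet n r) (k : ℤ) :
    (Rset n r lam k).ncard = lam k := by
  rw [Rset_eq hn hl, ncard_Ioc, PP_step hn hl k]; omega

theorem mem_image_perm (d : Equiv.Perm ℤ) (S : Set ℤ) (x : ℤ) : x ∈ d '' S ↔ d⁻¹ x ∈ S := by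
  constructor
  · rintro ⟨y, hy, rfl⟩; rwa [inv_app]
  · intro h; exact ⟨_, h, app_inv d x⟩

theorem JMat_eq {c : ℤ → ℤ} (hc : ∀ x k, x ∈ Rset n r mu k ↔ c x = k) (d : Equiv.Perm ℤ) (k l : ℤ) :
    JMat n r lam mu d k l = {x | x ∈ Rset n r lam k ∧ c (d⁻¹ x) = l}.ncard := by
  unfold JMat
  refine congrArg Set.ncard ?_
  ext x
  rw [Set.mem_inter_iff, mem_image_perm, hc]; rfl

theorem JMat_transpose (d : Equiv.Perm ℤ) (k l : ℤ) :
    JMat n r lam mu d k l = JMat n r mu lam d⁻¹ l k := by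
  unfold JMat
  have : Rset n r mu l ∩ (d⁻¹ : Equiv.Perm ℤ) '' Rset n r lam k =
      (d⁻¹ : Equiv.Perm ℤ) '' (Rset n r lam k ∩ d '' Rset n r mu l) := by
    ext x
    simp only [Set.mem_inter_iff, mem_image_perm, inv_inv, inv_app]
    tauto
  rw [this, Set.ncard_image_of_injective _ (d⁻¹).injective]

theorem JMat_row_finite (hn : 1 ≤ n) (hr : 1 ≤ r) (hl : lam ∈ LambdaSet n r)
    (hm : mu ∈ LambdaSet n r) (d : Equiv.Perm ℤ) (k : ℤ) :
    {l | JMat n r lam mu d k l ≠ 0}.Finite := by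
  obtain ⟨c, hc, -, -⟩ := exists_blk hn hr hm
  apply ((Rset_finite hn hl k).image (fun x => c (d⁻¹ x))).subset
  intro l h
  rw [Set.mem_ofPred_eq, JMat_eq hc] at h
  obtain ⟨x, hx, rfl⟩ := Set.nonempty_of_ncard_ne_zero h
  exact ⟨x, hx, rfl⟩

theorem JMat_ro (hn : 1 ≤ n) (hr : 1 ≤ r) (hl : lam ∈ LambdaSet n r)
    (hm : mu ∈ LambdaSet n r) (d : Equiv.Perm ℤ) : roM (JMat n r lam mu d) = lam := by
  obtain ⟨c, hc, -, -⟩ := exists_blk hn hr hm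
  funext k
  unfold roM
  simp only [JMat_eq hc]
  rw [fiber_total (Rset_finite hn hl k) (fun x => c (d⁻¹ x)), Rset_ncard hn hl]

theorem JMat_co (hn : 1 ≤ n) (hr : 1 ≤ r) (hl : lam ∈ LambdaSet n r)
    (hm : mu ∈ LambdaSet n r) (d : Equiv.Perm ℤ) : coM (JMat n r lam mu d) = mu := by
  have h := JMat_ro hn hr hm hl d⁻¹
  funext k
  rw [← congrFun h k]
  exact finsum_congr fun i => JMat_transpose d i k

theorem JMat_mem (hn : 1 ≤ n) (hr : 1 ≤ r) (hl : lam ∈ LambdaSet n r)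
    (hm : mu ∈ LambdaSet n r) {d : Equiv.Perm ℤ} (hd : d ∈ AffSym r) :
    JMat n r lam mu d ∈ ThetaSet n ∧ sigmaTot n (JMat n r lam mu d) = r := by
  refine ⟨⟨?_, JMat_row_finite hn hr hl hm d, ?_⟩, ?_⟩
  · obtain ⟨c, hc, -, hc3⟩ := exists_blk hn hr hm
    obtain ⟨b, hb, -, hb3⟩ := exists_blk hn hr hl
    have hd' : ∀ i : ℤ, d⁻¹ (i + r) = d⁻¹ i + r := (AffSym r).inv_mem hd
    intro k l
    rw [JMat_eq hc, JMat_eq hc]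
    have : {x | x ∈ Rset n r lam (k + n) ∧ c (d⁻¹ x) = l + n} =
        (fun x => x + (r : ℤ)) '' {x | x ∈ Rset n r lam k ∧ c (d⁻¹ x) = l} := by
      ext x
      simp only [Set.mem_ofPred_eq, Set.mem_image, hb]
      constructor
      · rintro ⟨h1, h2⟩
        refine ⟨x - r, ⟨?_, ?_⟩, by ring⟩
        · have := hb3 (x - r)
          rw [sub_add_cancel] at this; linarith
        · have h3 := hd' (x - r)
          rw [sub_add_cancel] at h3
          rw [h3, hc3] at h2
          linarith
      · rintro ⟨y, ⟨h1, h2⟩, rfl⟩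
        rw [hb3, hd', hc3, h1, h2]
        exact ⟨rfl, rfl⟩
    rw [this, Set.ncard_image_of_injective _ (add_left_injective _)]
  · intro l
    simp only [JMat_transpose d]
    exact JMat_row_finite hn hr hm hl d⁻¹ l
  · unfold sigmaTot
    rw [finsum_sum_comm]
    · have := JMat_ro hn hr hl hm d
      conv_rhs => rw [← hl.2]
      apply Finset.sum_congr rfl
      intro i _
      exact congrFun this i
    · intro i _
      exact JMat_row_finite hn hr hl hm d i

/-- rank of `x` inside its cell -/
noncomputable def cellRank (n r : ℕ) (lam mu : ℤ → ℕ) (d : Equiv.Perm ℤ) (k l x : ℤ) : ℕ :=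
  {x' | (x' ∈ Rset n r lam k ∧ d⁻¹ x' ∈ Rset n r mu l) ∧ x' ≤ x}.ncard

theorem position (hn : 1 ≤ n) (hr : 1 ≤ r) (hl : lam ∈ LambdaSet n r)
    (hm : mu ∈ LambdaSet n r) {d : Equiv.Perm ℤ} {k l x : ℤ}
    (hd : ∀ a b, a ∈ Rset n r lam k → b ∈ Rset n r lam k → a < b → d⁻¹ a < d⁻¹ b)
    (hx : x ∈ Rset n r lam k) (hxl : d⁻¹ x ∈ Rset n r mu l) :
    x = PP n r lam (k - 1) + psum (JMat n r lam mu d k) (l - 1) + cellRank n r lam mu d k l x := by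
  obtain ⟨c, hc, hc2, -⟩ := exists_blk hn hr hm
  have hfin := Rset_finite hn hl k
  have e1 : psum (JMat n r lam mu d k) (l - 1) =
      {x' | x' ∈ Rset n r lam k ∧ c (d⁻¹ x') ≤ l - 1}.ncard := by
    rw [← psum_fiber hfin (fun x' => c (d⁻¹ x'))]
    congr 1
    funext l'
    exact JMat_eq hc d k l'
  have e2 : (Set.Ioc (PP n r lam (k - 1)) x) = {x' | x' ∈ Rset n r lam k ∧ c (d⁻¹ x') ≤ l - 1} ∪
      {x' | (x' ∈ Rset n r lam k ∧ d⁻¹ x' ∈ Rset n r mu l) ∧ x' ≤ x} := by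
    have hx' := hx
    rw [Rset_eq hn hl, Set.mem_Ioc] at hx'
    rw [hc] at hxl
    ext y
    simp only [Set.mem_Ioc, Set.mem_union, Set.mem_ofPred_eq, hc]
    constructor
    · rintro ⟨h1, h2⟩
      have hy : y ∈ Rset n r lam k := by
        rw [Rset_eq hn hl, Set.mem_Ioc]; omega
      have hle : d⁻¹ y ≤ d⁻¹ x := by
        rcases h2.eq_or_lt with rfl | h
        · exact le_rfl
        · exact (hd _ _ hy hx h).le
      have := hc2 hle
      rw [hxl] at this
      rcases this.eq_or_lt with h | h
      · right; exact ⟨⟨hy, h⟩, h2⟩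
      · left; exact ⟨hy, by omega⟩
    · rintro (⟨h1, h2⟩ | ⟨⟨h1, h2⟩, h3⟩)
      · have h1' := h1
        rw [Rset_eq hn hl, Set.mem_Ioc] at h1'
        refine ⟨h1'.1, ?_⟩
        by_contra hcon
        have := hc2 (hd _ _ hx h1 (by omega)).le
        omega
      · rw [Rset_eq hn hl, Set.mem_Ioc] at h1
        exact ⟨h1.1, h3⟩
  have e3 := congrArg Set.ncard e2
  rw [ncard_Ioc, Set.ncard_union_eq ?_ (hfin.subset fun y hy => hy.1)
    (hfin.subset fun y hy => hy.1.1), ← e1] at e3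
  · rw [Rset_eq hn hl, Set.mem_Ioc] at hx
    unfold cellRank
    omega
  · rw [Set.disjoint_left]
    rintro y ⟨h1, h2⟩ ⟨⟨h3, h4⟩, h5⟩
    rw [hc] at h4
    omega

theorem cellRank_pos (hn : 1 ≤ n) (hl : lam ∈ LambdaSet n r) {d : Equiv.Perm ℤ} {k l x : ℤ}
    (hx : x ∈ Rset n r lam k) (hxl : d⁻¹ x ∈ Rset n r mu l) : 1 ≤ cellRank n r lam mu d k l x := by
  unfold cellRank
  rw [Nat.one_le_iff_ne_zero, ← Nat.pos_iff_ne_zero,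
    Set.ncard_pos ((Rset_finite hn hl k).subset fun y hy => hy.1.1)]
  exact ⟨x, ⟨hx, hxl⟩, le_rfl⟩

theorem cellRank_le (hn : 1 ≤ n) (hl : lam ∈ LambdaSet n r) {d : Equiv.Perm ℤ} {k l x : ℤ} :
    cellRank n r lam mu d k l x ≤ JMat n r lam mu d k l := by
  unfold cellRank JMat
  apply Set.ncard_le_ncard
  · rintro y ⟨⟨h1, h2⟩, -⟩
    exact ⟨h1, (mem_image_perm _ _ _).2 h2⟩
  · exact (Rset_finite hn hl k).subset fun y hy => hy.1

theorem cellRank_transpose {d : Equiv.Perm ℤ} {k l y : ℤ}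
    (hd : ∀ a b, a ∈ Rset n r mu l → b ∈ Rset n r mu l → a < b → d a < d b)
    (hy : y ∈ Rset n r mu l) :
    cellRank n r lam mu d k l (d y) = cellRank n r mu lam d⁻¹ l k y := by
  unfold cellRank
  have : {x' | (x' ∈ Rset n r lam k ∧ d⁻¹ x' ∈ Rset n r mu l) ∧ x' ≤ d y} =
      d '' {x' | (x' ∈ Rset n r mu l ∧ d⁻¹⁻¹ x' ∈ Rset n r lam k) ∧ x' ≤ y} := by
    ext x
    rw [mem_image_perm]
    simp only [Set.mem_ofPred_eq, inv_inv, app_inv]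
    constructor
    · rintro ⟨⟨h1, h2⟩, h3⟩
      refine ⟨⟨h2, h1⟩, ?_⟩
      by_contra hcon
      have := hd _ _ hy h2 (by omega)
      rw [app_inv] at this
      omega
    · rintro ⟨⟨h1, h2⟩, h3⟩
      refine ⟨⟨h2, h1⟩, ?_⟩
      rcases h3.eq_or_lt with h | h
      · rw [← h, app_inv]
      · have := hd _ _ h1 hy h
        rw [app_inv] at this
        omega
  rw [this, Set.ncard_image_of_injective _ d.injective]

theorem d_unique (hn : 1 ≤ n) (hr : 1 ≤ r) (hl : lam ∈ LambdaSet n r)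
    (hm : mu ∈ LambdaSet n r) {d e : Equiv.Perm ℤ} (hd : d ∈ DRep2 n r lam mu)
    (he : e ∈ DRep2 n r lam mu) (hJ : JMat n r lam mu d = JMat n r lam mu e) : d = e := by
  obtain ⟨c, hc, -, -⟩ := exists_blk hn hr hm
  obtain ⟨b, hb, -, -⟩ := exists_blk hn hr hl
  have key : ∀ f ∈ DRep2 n r lam mu, ∀ y,
      ∃ j : ℕ, 1 ≤ j ∧ j ≤ JMat n r lam mu f (b (f y)) (c y) ∧
        f y = PP n r lam (b (f y) - 1) + psum (JMat n r lam mu f (b (f y))) (c y - 1) + j ∧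
        y = PP n r mu (c y - 1) + psum (fun k => JMat n r lam mu f k (c y)) (b (f y) - 1) + j := by
    intro f hf y
    have h1 := ((drep_iff hn hr hl f).1 hf.1).2
    have h2 := ((drep_iff hn hr hm f⁻¹).1 hf.2).2
    rw [inv_inv] at h2
    have m1 : f y ∈ Rset n r lam (b (f y)) := (hb _ _).2 rfl
    have m2 : f⁻¹ (f y) ∈ Rset n r mu (c y) := by rw [inv_app]; exact (hc _ _).2 rfl
    have m3 : y ∈ Rset n r mu (c y) := (hc _ _).2 rfl
    have m4 : f⁻¹⁻¹ y ∈ Rset n r lam (b (f y)) := by rw [inv_inv]; exact m1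
    refine ⟨cellRank n r lam mu f (b (f y)) (c y) (f y), cellRank_pos hn hl m1 m2,
      cellRank_le hn hl, position hn hr hl hm (fun a b => h1 a b _) m1 m2, ?_⟩
    rw [cellRank_transpose (fun a b => h2 a b _) m3]
    have := position hn hr hm hl (d := f⁻¹) (k := c y) (l := b (f y)) (x := y)
      (by rw [inv_inv]; exact fun a b => h2 a b _) m3 m4
    rw [show (fun k => JMat n r lam mu f k (c y)) = JMat n r mu lam f⁻¹ (c y) from
      funext fun k => JMat_transpose f k (c y)]
    exact this
  ext y
  obtain ⟨j, j1, j2, j3, j4⟩ := key d hd y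
  obtain ⟨j', j1', j2', j3', j4'⟩ := key e he y
  rw [← hJ] at j2' j3' j4'
  set A := JMat n r lam mu d with hA
  have hfin : {k | (fun k => A k (c y)) k ≠ 0}.Finite := by
    simp only [hA, JMat_transpose d]
    exact JMat_row_finite hn hr hm hl d⁻¹ (c y)
  have s1 := psum_step hfin (b (d y))
  have s2 := psum_step hfin (b (e y))
  have hmono := psum_mono hfin
  have hk : b (d y) = b (e y) := by
    apply le_antisymm
    · by_contra hcon
      have := hmono (show b (e y) ≤ b (d y) - 1 by omega)
      omega
    · by_contra hcon
      have := hmono (show b (d y) ≤ b (e y) - 1 by omega)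
      omega
  rw [← hk] at j3' j4'
  omega

end matrix

/-! ### Surjectivity -/

section surj

def blockEquiv (n : ℕ) (hn : 1 ≤ n) : ℤ ≃ (Finset.Icc (1 : ℤ) n) × ℤ where
  toFun x := (⟨(x - 1) % n + 1, Finset.mem_Icc.2 (res_mem hn x)⟩, (x - 1) / n)
  invFun p := p.1.1 + n * p.2
  left_inv x := by
    have := res_eq n x
    simp only
    rw [this]; ring
  right_inv p := by
    obtain ⟨⟨i, hi⟩, m⟩ := p
    rw [Finset.mem_Icc] at hi
    have h1 := res_shift hi.1 hi.2 m
    have h2 := res_eq n (i + n * m)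
    simp only [Prod.mk.injEq, Subtype.mk.injEq]
    refine ⟨h1, ?_⟩
    rw [h1] at h2
    have h3 : (n : ℤ) * ((i + n * m - 1) / n) = n * m := by linarith
    exact mul_left_cancel₀ (by omega) h3

theorem finsum_split {n : ℕ} (hn : 1 ≤ n) (f : ℤ → ℕ) (hf : {l | f l ≠ 0}.Finite) :
    ∑ᶠ j, f j = ∑ j ∈ Finset.Icc (1 : ℤ) n, ∑ᶠ m : ℤ, f (j + n * m) := by
  rw [← finsum_comp_equiv (blockEquiv n hn).symm, finsum_curry, finsum_eq_sum_of_fintype]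
  · exact Finset.sum_coe_sort (Finset.Icc (1 : ℤ) n) (fun j => ∑ᶠ m : ℤ, f (j + n * m))
  · exact hf.preimage (blockEquiv n hn).symm.injective.injOn

theorem co_sum {n : ℕ} (hn : 1 ≤ n) {A : ℤ → ℤ → ℕ} (hA : A ∈ ThetaSet n) :
    ∑ j ∈ Finset.Icc (1 : ℤ) n, coM A j = ∑ i ∈ Finset.Icc (1 : ℤ) n, roM A i := by
  obtain ⟨h1, h2, h3⟩ := hA
  have hsh : ∀ i j m : ℤ, A (i + n * m) (j + n * m) = A i j := by
    intro i j m
    have := per_shift (r := 1) (f := fun m : ℤ => A (i + n * m) (j + n * m)) (by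
      intro m
      simp only [Nat.cast_one]
      rw [← h1 (i + n * m) (j + n * m)]
      congr 1 <;> ring) 0 m
    simpa using this
  unfold coM roM
  have e1 : ∀ j, ∑ᶠ i, A i j = ∑ i ∈ Finset.Icc (1 : ℤ) n, ∑ᶠ m : ℤ, A (i + n * m) j :=
    fun j => finsum_split hn (fun i => A i j) (h3 j)
  have e2 : ∀ i, ∑ᶠ j, A i j = ∑ j ∈ Finset.Icc (1 : ℤ) n, ∑ᶠ m : ℤ, A i (j + n * m) :=
    fun i => finsum_split hn (fun j => A i j) (h2 i)
  simp only [e1, e2]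
  rw [Finset.sum_comm]
  apply Finset.sum_congr rfl
  intro i _
  apply Finset.sum_congr rfl
  intro j _
  rw [← finsum_comp_equiv (Equiv.neg ℤ)]
  apply finsum_congr
  intro m
  rw [← hsh (i + n * (Equiv.neg ℤ) m) j m]
  congr 1
  simp only [Equiv.neg_apply]; ring

variable {n r : ℕ} {A : ℤ → ℤ → ℕ}

theorem ro_mem (hA : A ∈ ThetaSet n) (hs : ∑ i ∈ Finset.Icc (1 : ℤ) n, roM A i = r) :
    roM A ∈ LambdaSet n r := by
  refine ⟨fun i => ?_, hs⟩
  unfold roM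
  rw [← finsum_comp_equiv (Equiv.addRight (n : ℤ))]
  apply finsum_congr
  intro j
  rw [Equiv.coe_addRight, ← hA.1 (i - n) j, sub_add_cancel]

noncomputable def F (n r : ℕ) (A : ℤ → ℤ → ℕ) (k l j : ℤ) : ℤ :=
  PP n r (roM A) (k - 1) + psum (A k) (l - 1) + j

theorem F_mem (hn : 1 ≤ n) (hl : roM A ∈ LambdaSet n r) (hA : ∀ k, {l | A k l ≠ 0}.Finite)
    {k l j : ℤ} (h1 : 1 ≤ j) (h2 : j ≤ A k l) : F n r A k l j ∈ Rset n r (roM A) k := by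
  rw [Rset_eq hn hl, Set.mem_Ioc, PP_step hn hl k]
  have := psum_step (hA k) l
  have h3 : psum (A k) l ≤ roM A k := psum_le_total (hA k) l
  unfold F
  constructor <;> omega

theorem F_lex (hA : ∀ k, {l | A k l ≠ 0}.Finite)
    {k l j l' j' : ℤ} (h2 : j ≤ A k l) (h1' : 1 ≤ j')
    (h : l < l' ∨ l = l' ∧ j < j') : F n r A k l j < F n r A k l' j' := by
  unfold F
  rcases h with h | ⟨rfl, h⟩
  · have := psum_step (hA k) l
    have := psum_mono (hA k) (show l ≤ l' - 1 by omega)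
    omega
  · omega

theorem F_lex_iff (hA : ∀ k, {l | A k l ≠ 0}.Finite)
    {k l j l' j' : ℤ} (h1 : 1 ≤ j) (h2 : j ≤ A k l) (h1' : 1 ≤ j') (h2' : j' ≤ A k l') :
    F n r A k l j < F n r A k l' j' ↔ (l < l' ∨ l = l' ∧ j < j') := by
  refine ⟨fun h => ?_, F_lex hA h2 h1'⟩
  by_contra hcon
  by_cases heq : l = l' ∧ j = j'
  · obtain ⟨rfl, rfl⟩ := heq
    exact lt_irrefl _ h
  · have := F_lex (n := n) (r := r) hA h2' h1 (show l' < l ∨ l' = l ∧ j' < j by omega)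
    omega

theorem F_surj (hn : 1 ≤ n) (hr : 1 ≤ r) (hl : roM A ∈ LambdaSet n r)
    (hA : ∀ k, {l | A k l ≠ 0}.Finite) (x : ℤ) :
    ∃ k l j : ℤ, 1 ≤ j ∧ j ≤ A k l ∧ F n r A k l j = x := by
  obtain ⟨b, hb, -, -⟩ := exists_blk hn hr hl
  have hx : x ∈ Rset n r (roM A) (b x) := (hb _ _).2 rfl
  set k := b x
  rw [Rset_eq hn hl, Set.mem_Ioc, PP_step hn hl k] at hx
  obtain ⟨l, h1, h2⟩ := exists_step (Q := fun l => (psum (A k) l : ℤ))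
    (x := x - PP n r (roM A) (k - 1)) (by
      intro a b hab
      have := psum_mono (hA k) hab
      simp only; omega)
    (by
      obtain ⟨m, hm⟩ := psum_zero (hA k)
      exact ⟨m, by rw [hm]; push_cast; omega⟩)
    (by
      obtain ⟨m, hm⟩ := psum_total (hA k)
      refine ⟨m, ?_⟩
      have : psum (A k) m = roM A k := hm m le_rfl
      rw [this]; omega)
  have := psum_step (hA k) l
  exact ⟨k, l, x - PP n r (roM A) (k - 1) - psum (A k) (l - 1), by omega, by omega, by
    unfold F; ring⟩

theorem F_inj (hn : 1 ≤ n) (hr : 1 ≤ r) (hl : roM A ∈ LambdaSet n r)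
    (hA : ∀ k, {l | A k l ≠ 0}.Finite) {k l j k' l' j' : ℤ} (h1 : 1 ≤ j) (h2 : j ≤ A k l)
    (h1' : 1 ≤ j') (h2' : j' ≤ A k' l') (h : F n r A k l j = F n r A k' l' j') :
    k = k' ∧ l = l' ∧ j = j' := by
  obtain ⟨b, hb, -, -⟩ := exists_blk hn hr hl
  have m1 := F_mem hn hl hA h1 h2
  have m2 := F_mem hn hl hA h1' h2'
  rw [h] at m1
  rw [hb] at m1 m2
  have hk : k = k' := m1.symm.trans m2
  subst hk
  have a1 := F_lex_iff (n := n) (r := r) hA h1 h2 h1' h2'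
  have a2 := F_lex_iff (n := n) (r := r) hA h1' h2' h1 h2
  rw [h] at a1 a2
  simp only [lt_irrefl, false_iff] at a1 a2
  omega

theorem F_shift (hn : 1 ≤ n) (hA : ∀ i j : ℤ, A (i + n) (j + n) = A i j) (k l j : ℤ) :
    F n r A (k + n) (l + n) j = F n r A k l j + r := by
  unfold F
  rw [show k + n - 1 = k - 1 + n by ring, PP_shift hn]
  have : psum (A (k + n)) (l + n - 1) = psum (A k) (l - 1) := by
    unfold psum
    rw [← finsum_comp_equiv (Equiv.addRight (n : ℤ))]
    apply finsum_congr
    intro m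
    rw [Equiv.coe_addRight, hA]
    have : m + n ≤ l + n - 1 ↔ m ≤ l - 1 := by omega
    simp only [this]
  rw [this]; ring

/-- crossing lemma: the order in a row block implies the order of the column images -/
theorem F_cross (hn : 1 ≤ n) (hr : 1 ≤ r) (B : ℤ → ℤ → ℕ) (hB : ∀ k l, B l k = A k l)
    (hm : roM B ∈ LambdaSet n r) (hA : ∀ k, {l | A k l ≠ 0}.Finite)
    (hBf : ∀ k, {l | B k l ≠ 0}.Finite) {k l j l' j' : ℤ} (h1 : 1 ≤ j) (h2 : j ≤ A k l)
    (h1' : 1 ≤ j') (h2' : j' ≤ A k l') (h : F n r A k l j < F n r A k l' j') :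
    F n r B l k j < F n r B l' k j' := by
  rw [F_lex_iff hA h1 h2 h1' h2'] at h
  rcases h with h | ⟨rfl, h⟩
  · obtain ⟨c, hc, hc2, -⟩ := exists_blk hn hr hm
    have m1 := F_mem hn hm hBf (k := l) (l := k) h1 (by rw [hB]; exact h2)
    have m2 := F_mem hn hm hBf (k := l') (l := k) h1' (by rw [hB]; exact h2')
    rw [hc] at m1 m2
    by_contra hcon
    have := hc2 (not_lt.1 hcon)
    omega
  · exact F_lex hBf (by rw [hB]; exact h2) h1' (Or.inr ⟨rfl, h⟩)

theorem surj (hn : 1 ≤ n) (hr : 1 ≤ r) (hA : A ∈ ThetaSet n) (hs : sigmaTot n A = r) :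
    ∃ lam mu d, lam ∈ LambdaSet n r ∧ mu ∈ LambdaSet n r ∧ d ∈ DRep2 n r lam mu ∧
      JMat n r lam mu d = A := by
  obtain ⟨hA1, hA2, hA3⟩ := id hA
  have hsum : ∑ i ∈ Finset.Icc (1 : ℤ) n, roM A i = r := by
    rw [← hs]
    unfold sigmaTot
    rw [finsum_sum_comm]
    · rfl
    · intro i _; exact hA2 i
  have hl := ro_mem hA hsum
  set B : ℤ → ℤ → ℕ := fun l k => A k l with hBdef
  have hB : ∀ k l, B l k = A k l := fun _ _ => rfl
  have hB' : ∀ k l, A l k = B k l := fun _ _ => rfl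
  have hBT : B ∈ ThetaSet n := ⟨fun i j => hA1 j i, hA3, hA2⟩
  have hm : roM B ∈ LambdaSet n r := ro_mem hBT (by rw [← hsum, ← co_sum hn hA]; rfl)
  let T := {t : ℤ × ℤ × ℤ // 1 ≤ t.2.2 ∧ t.2.2 ≤ A t.1 t.2.1}
  let e1 : T ≃ ℤ := Equiv.ofBijective (fun t => F n r A t.1.1 t.1.2.1 t.1.2.2) (by
    constructor
    · rintro ⟨⟨k, l, j⟩, h1, h2⟩ ⟨⟨k', l', j'⟩, h1', h2'⟩ h
      obtain ⟨rfl, rfl, rfl⟩ := F_inj hn hr hl hA2 h1 h2 h1' h2' h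
      rfl
    · intro x
      obtain ⟨k, l, j, h1, h2, h3⟩ := F_surj hn hr hl hA2 x
      exact ⟨⟨⟨k, l, j⟩, h1, h2⟩, h3⟩)
  let e2 : T ≃ ℤ := Equiv.ofBijective (fun t => F n r B t.1.2.1 t.1.1 t.1.2.2) (by
    constructor
    · rintro ⟨⟨k, l, j⟩, h1, h2⟩ ⟨⟨k', l', j'⟩, h1', h2'⟩ h
      obtain ⟨rfl, rfl, rfl⟩ := F_inj hn hr hm hA3 h1 h2 h1' h2' h
      rfl
    · intro x
      obtain ⟨k, l, j, h1, h2, h3⟩ := F_surj hn hr hm hA3 x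
      exact ⟨⟨⟨l, k, j⟩, h1, h2⟩, h3⟩)
  let d : Equiv.Perm ℤ := e2.symm.trans e1
  have hd1 : ∀ k l j : ℤ, 1 ≤ j → j ≤ A k l → d (F n r B l k j) = F n r A k l j := by
    intro k l j h1 h2
    have : d (e2 ⟨⟨k, l, j⟩, h1, h2⟩) = e1 ⟨⟨k, l, j⟩, h1, h2⟩ := by simp [d]
    exact this
  have hd2 : ∀ k l j : ℤ, 1 ≤ j → j ≤ A k l → d⁻¹ (F n r A k l j) = F n r B l k j := by
    intro k l j h1 h2
    rw [← hd1 k l j h1 h2, inv_app]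
  have hdA : d ∈ AffSym r := by
    intro x
    obtain ⟨l, k, j, h1, h2, rfl⟩ := F_surj hn hr hm hA3 x
    rw [hd1 k l j h1 h2, ← F_shift hn hBT.1, hd1 _ _ _ h1 (by rw [hA1]; exact h2), F_shift hn hA1]
  obtain ⟨b, hb, -, -⟩ := exists_blk hn hr hl
  obtain ⟨c, hc, -, -⟩ := exists_blk hn hr hm
  refine ⟨roM A, roM B, d, hl, hm, ⟨?_, ?_⟩, ?_⟩
  · rw [drep_iff hn hr hl]
    refine ⟨hdA, ?_⟩
    intro x y q hx hy hxy
    obtain ⟨k, l, j, h1, h2, rfl⟩ := F_surj hn hr hl hA2 x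
    obtain ⟨k', l', j', h1', h2', rfl⟩ := F_surj hn hr hl hA2 y
    have m1 := F_mem hn hl hA2 h1 h2
    have m2 := F_mem hn hl hA2 h1' h2'
    rw [hb] at hx hy m1 m2
    have hk : k = k' := by omega
    subst hk
    rw [hd2 _ _ _ h1 h2, hd2 _ _ _ h1' h2']
    exact F_cross hn hr B hB hm hA2 hA3 h1 h2 h1' h2' hxy
  · rw [drep_iff hn hr hm]
    refine ⟨(AffSym r).inv_mem hdA, ?_⟩
    intro x y q hx hy hxy
    rw [inv_inv]
    obtain ⟨k, l, j, h1, h2, rfl⟩ := F_surj hn hr hm hA3 x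
    obtain ⟨k', l', j', h1', h2', rfl⟩ := F_surj hn hr hm hA3 y
    have m1 := F_mem hn hm hA3 h1 h2
    have m2 := F_mem hn hm hA3 h1' h2'
    rw [hc] at hx hy m1 m2
    have hk : k = k' := by omega
    subst hk
    rw [hd1 _ _ _ h1 h2, hd1 _ _ _ h1' h2']
    exact F_cross hn hr A hB' hl hA3 hA2 h1 h2 h1' h2' hxy
  · funext k l
    rw [JMat_eq hc]
    have : {x | x ∈ Rset n r (roM A) k ∧ c (d⁻¹ x) = l} =
        Set.Ioc (F n r A k l 0) (F n r A k l (A k l)) := by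
      ext x
      simp only [Set.mem_ofPred_eq, Set.mem_Ioc]
      constructor
      · rintro ⟨h1, h2⟩
        obtain ⟨k', l', j, h3, h4, rfl⟩ := F_surj hn hr hl hA2 x
        have m1 := F_mem hn hl hA2 h3 h4
        rw [hb] at m1 h1
        have hk : k = k' := by omega
        subst hk
        rw [hd2 _ _ _ h3 h4] at h2
        have m2 := F_mem hn hm hA3 (k := l') (l := k) h3 h4
        rw [hc] at m2
        have hk : l = l' := by omega
        subst hk
        unfold F
        constructor <;> omega
      · rintro ⟨h1, h2⟩
        obtain ⟨j, rfl⟩ : ∃ j, x = F n r A k l j := ⟨x - F n r A k l 0, by unfold F; ring⟩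
        have h3 : 1 ≤ j := by unfold F at h1; omega
        have h4 : j ≤ A k l := by unfold F at h2; omega
        refine ⟨F_mem hn hl hA2 h3 h4, ?_⟩
        rw [hd2 _ _ _ h3 h4, ← hc]
        exact F_mem hn hm hA3 h3 h4
    rw [this, ncard_Ioc]
    unfold F
    omega

end surj

end JProof


/-- the map `J_Δ : (λ, d, μ) ↦ (|R^λ_k ∩ d(R^μ_l)|)_{k,l}` is a
well-defined bijection from `{(λ,d,μ) | λ, μ ∈ Λ_Δ(n,r), d ∈ D^Δ_{λ,μ}}` onto
`Θ_Δ(n,r)`, and `ro(J_Δ(λ,d,μ)) = λ`, `co(J_Δ(λ,d,μ)) = μ`. -/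
theorem JMat_bijOn (n r : ℕ) (hn : 1 ≤ n) (hr : 1 ≤ r) :
    Set.BijOn (fun p : (ℤ → ℕ) × Equiv.Perm ℤ × (ℤ → ℕ) => JMat n r p.1 p.2.2 p.2.1)
      {p : (ℤ → ℕ) × Equiv.Perm ℤ × (ℤ → ℕ) |
        p.1 ∈ LambdaSet n r ∧ p.2.2 ∈ LambdaSet n r ∧ p.2.1 ∈ DRep2 n r p.1 p.2.2}
      {A : ℤ → ℤ → ℕ | A ∈ ThetaSet n ∧ sigmaTot n A = r} ∧
    ∀ lam mu : ℤ → ℕ, ∀ d : Equiv.Perm ℤ,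
      lam ∈ LambdaSet n r → mu ∈ LambdaSet n r → d ∈ DRep2 n r lam mu →
      roM (JMat n r lam mu d) = lam ∧ coM (JMat n r lam mu d) = mu := by
  refine ⟨⟨?_, ?_, ?_⟩, ?_⟩
  · rintro ⟨lam, d, mu⟩ ⟨hl, hm, hd⟩
    exact JProof.JMat_mem hn hr hl hm hd.1.1
  · rintro ⟨lam, d, mu⟩ ⟨hl, hm, hd⟩ ⟨lam', d', mu'⟩ ⟨hl', hm', hd'⟩ h
    dsimp only at hl hm hd hl' hm' hd' h
    have e1 : lam = lam' := by
      rw [← JProof.JMat_ro hn hr hl hm d, h, JProof.JMat_ro hn hr hl' hm' d']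
    have e2 : mu = mu' := by
      rw [← JProof.JMat_co hn hr hl hm d, h, JProof.JMat_co hn hr hl' hm' d']
    subst e1 e2
    rw [JProof.d_unique hn hr hl hm hd hd' h]
  · rintro A ⟨hA, hs⟩
    obtain ⟨lam, mu, d, hl, hm, hd, hJ⟩ := JProof.surj hn hr hA hs
    exact ⟨(lam, d, mu), ⟨hl, hm, hd⟩, hJ⟩
  · intro lam mu d hl hm _
    exact ⟨JProof.JMat_ro hn hr hl hm d, JProof.JMat_co hn hr hl hm d⟩
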